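/- Let n ≥ 1 be an integer, 0 ≤ k ≤ n, 0 < p < 1, q = 1 − p. Then |∂/∂p F_{n,p}(k) − ∂/∂p G_{n,p}(k)| ≤ (1/(pq)) · (c₁/p + c₂), where c₁ = 0.516 and c₂ = 0.121; here ∂/∂p F_{n,p}(k) is the derivative in p of p ↦ Σ_{i=0}^{k−1} C(n,i) p^i q^{n−i}, which equals −n C(n−1,k−1) p^{k−1} q^{n−k}, and ∂/∂p G_{n,p}(k) is the derivative in p of p ↦ Φ((k − np)/√(npq)). -/

import Mathlib

/-- The standard normal distribution function Φ. -/
noncomputable def Phi (x : ℝ) : ℝ :=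
  (Real.sqrt (2 * Real.pi))⁻¹ * ∫ t in Set.Iio x, Real.exp (-t ^ 2 / 2)

/-! With `n = m + 1` and `q = 1 - p`, the derivative of the binomial distribution function
telescopes to `-n b`, where `b = C(m, j) p ^ j q ^ (m - j)` and `k = j + 1`, while the derivative
of `Φ((k - np) / √(npq))` is `-(√(npq) φ(x) + (1 - 2p) x φ(x) / 2) / (pq)` at
`x = (k - np) / √(npq)`. As `|x| φ(x) ≤ 0.242`, what remains is the local limit estimate
`|npq b - √(npq) φ(x)| ≤ 0.516 / p`.

Both terms are Fourier integrals: of `exp(iqt) f(t) ^ m` over `[-π, π]`, with `f` the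
characteristic function of a centred Bernoulli variable, and of `g(t) ^ (m + 1)` over the line,
with `g(t) = exp(-pq t² / 2)`. The integrands are compared by telescoping `f ^ m - g ^ m` and using
`|f| ≤ exp(-pq t² / 5)` on `[-π, π]` and `|f - g| ≤ pq (p² + q²) |t|³ / 6`. If `n² p³ q ≤ 0.669 m`,
each of the two terms is itself small enough. -/

open MeasureTheory ProbabilityTheory Polynomial Real
open Complex (I)
open scoped Complex

local notation "φ" => gaussianPDFReal 0 1

section ComplexExponential

theorem hasDerivAt_cexp_I_mul (c t : ℝ) :
    HasDerivAt (fun s : ℝ => cexp (I * ↑(c * s)))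
      (I * c * cexp (I * ↑(c * t))) t := by
  have h := (((hasDerivAt_id t).const_mul c).ofReal_comp.const_mul I).cexp
  exact h.congr_deriv (by simp only [id, mul_one]; ring)

theorem norm_cexp_I_mul_sub_one_sub_le_of_nonneg {y : ℝ} (hy : 0 ≤ y) :
    ‖cexp (I * y) - 1 - I * y‖ ≤ y ^ 2 / 2 := by
  have hf (x : ℝ) : HasDerivAt (fun x : ℝ => cexp (I * x) - 1 - I * x)
      (I * (cexp (I * x) - 1)) x := by
    have h := ((hasDerivAt_cexp_I_mul 1 x).sub_const 1).sub
      ((hasDerivAt_id x).ofReal_comp.const_mul I)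
    simp only [id, one_mul, Complex.ofReal_one, mul_one] at h
    exact h.congr_deriv (by ring)
  have hB (x : ℝ) : HasDerivAt (fun x : ℝ => x ^ 2 / 2) x x :=
    ((hasDerivAt_pow 2 x).div_const 2).congr_deriv (by norm_num)
  refine image_norm_le_of_norm_deriv_right_le_deriv_boundary
    (fun x _ => (hf x).continuousAt.continuousWithinAt)
    (fun x _ => (hf x).hasDerivWithinAt) (by simp) hB (fun x hx => ?_) ⟨hy, le_rfl⟩
  rw [norm_mul, Complex.norm_I, one_mul]
  simpa [abs_of_nonneg hx.1] using Real.norm_exp_I_mul_ofReal_sub_one_le (x := x)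

theorem norm_cexp_I_mul_sub_one_sub_le (y : ℝ) :
    ‖cexp (I * y) - 1 - I * y‖ ≤ y ^ 2 / 2 := by
  rcases le_total 0 y with hy | hy
  · exact norm_cexp_I_mul_sub_one_sub_le_of_nonneg hy
  · have h := norm_cexp_I_mul_sub_one_sub_le_of_nonneg (neg_nonneg.2 hy)
    rw [← Complex.norm_conj, neg_sq] at h
    simpa [← Complex.exp_conj, sub_eq_add_neg] using h

end ComplexExponential

section BernoulliCharFun

/-- The characteristic function of a centred Bernoulli variable, which takes the value `1 - p`
with probability `p` and `-p` with probability `1 - p`. -/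
noncomputable def bernoulliCharFun (p t : ℝ) : ℂ :=
  (1 - p) * cexp (I * ↑(-p * t)) + p * cexp (I * ↑((1 - p) * t))

theorem continuous_bernoulliCharFun (p : ℝ) : Continuous (bernoulliCharFun p) := by
  unfold bernoulliCharFun
  fun_prop

theorem bernoulliCharFun_eq_cexp_mul (p t : ℝ) :
    bernoulliCharFun p t =
      cexp (I * ↑(-p * t)) * ((1 - p) + p * cexp (I * t)) := by
  have h : cexp (I * ↑((1 - p) * t)) =
      cexp (I * ↑(-p * t)) * cexp (I * t) := by
    rw [← Complex.exp_add]
    push_cast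
    ring_nf
  rw [bernoulliCharFun, h]
  ring

theorem conj_bernoulliCharFun (p t : ℝ) :
    (starRingEnd ℂ) (bernoulliCharFun p t) = bernoulliCharFun p (-t) := by
  simp [bernoulliCharFun, ← Complex.exp_conj]

theorem sq_norm_bernoulliCharFun (p t : ℝ) :
    ‖bernoulliCharFun p t‖ ^ 2 = 1 - 2 * (p * (1 - p)) * (1 - cos t) := by
  rw [bernoulliCharFun_eq_cexp_mul, norm_mul, Complex.norm_exp_I_mul_ofReal, one_mul,
    mul_comm I, Complex.exp_mul_I, ← Complex.ofReal_cos, ← Complex.ofReal_sin, Complex.sq_norm,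
    Complex.normSq_apply]
  simp only [Complex.add_re, Complex.add_im, Complex.sub_re, Complex.sub_im, Complex.one_re,
    Complex.one_im, Complex.mul_re, Complex.mul_im, Complex.ofReal_re, Complex.ofReal_im,
    Complex.I_re, Complex.I_im]
  linear_combination p ^ 2 * sin_sq_add_cos_sq t

theorem cos_le_one_sub_sq_div_five {t : ℝ} (ht : |t| ≤ π) : cos t ≤ 1 - t ^ 2 / 5 := by
  have hπ : 1 / 5 ≤ 2 / π ^ 2 := by
    rw [div_le_div_iff₀ (by norm_num) (by positivity)]
    nlinarith [pi_lt_d2, pi_pos]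
  have h := mul_le_mul_of_nonneg_right hπ (sq_nonneg t)
  linarith [cos_le_one_sub_mul_cos_sq ht]

variable {p t : ℝ}

theorem norm_bernoulliCharFun_le (hp : p ∈ Set.Icc (0 : ℝ) 1) (ht : |t| ≤ π) :
    ‖bernoulliCharFun p t‖ ≤ rexp (-(p * (1 - p) / 5 * t ^ 2)) := by
  have hpq : 0 ≤ p * (1 - p) := mul_nonneg hp.1 (sub_nonneg.2 hp.2)
  refine (sq_le_sq₀ (norm_nonneg _) (exp_pos _).le).1 ?_
  calc ‖bernoulliCharFun p t‖ ^ 2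
      = 1 - 2 * (p * (1 - p)) * (1 - cos t) := sq_norm_bernoulliCharFun p t
    _ ≤ -(2 * (p * (1 - p) / 5 * t ^ 2)) + 1 := by
      nlinarith [mul_le_mul_of_nonneg_left (cos_le_one_sub_sq_div_five ht) hpq]
    _ ≤ rexp (-(2 * (p * (1 - p) / 5 * t ^ 2))) := add_one_le_exp _
    _ = rexp (-(p * (1 - p) / 5 * t ^ 2)) ^ 2 := by
      rw [← exp_nat_mul]
      push_cast
      ring_nf

theorem norm_bernoulliCharFun_pow_le (hp : p ∈ Set.Icc (0 : ℝ) 1) (ht : |t| ≤ π) (m : ℕ) :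
    ‖bernoulliCharFun p t‖ ^ m ≤ rexp (-(m * (p * (1 - p) / 5) * t ^ 2)) := by
  refine (pow_le_pow_left₀ (norm_nonneg _) (norm_bernoulliCharFun_le hp ht) m).trans_eq ?_
  rw [← exp_nat_mul]
  ring_nf

theorem hasDerivAt_bernoulliCharFun (p t : ℝ) :
    HasDerivAt (bernoulliCharFun p)
      (p * (1 - p) * (I * (cexp (I * ↑((1 - p) * t)) - cexp (I * ↑(-p * t))))) t := by
  refine (((hasDerivAt_cexp_I_mul (-p) t).const_mul (1 - p : ℂ)).add
    ((hasDerivAt_cexp_I_mul (1 - p) t).const_mul (p : ℂ))).congr_deriv ?_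
  push_cast
  ring

/-- The left-hand side is `(f'(t) + p (1 - p) t f(t)) / (p (1 - p))` for `f = bernoulliCharFun p`;
it vanishes for the Gaussian in place of `f`. -/
theorem norm_I_mul_sub_add_mul_bernoulliCharFun_le (p t : ℝ) :
    ‖I * (cexp (I * ↑((1 - p) * t)) - cexp (I * ↑(-p * t))) +
        t * bernoulliCharFun p t‖ ≤ (p ^ 2 + (1 - p) ^ 2) / 2 * t ^ 2 := by
  set A := cexp (I * ↑((1 - p) * t)) with hA
  set B := cexp (I * ↑(-p * t)) with hB
  have hsplit : I * (A - B) + t * bernoulliCharFun p t =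
      I * B * (A - 1 - I * ↑((1 - p) * t)) - I * A * (B - 1 - I * ↑(-p * t)) := by
    rw [bernoulliCharFun, ← hA, ← hB]
    push_cast
    linear_combination (B * (1 - p) * t + A * p * t) * Complex.I_sq
  calc ‖I * (A - B) + t * bernoulliCharFun p t‖
      ≤ ‖A - 1 - I * ↑((1 - p) * t)‖ + ‖B - 1 - I * ↑(-p * t)‖ := by
        rw [hsplit]
        refine (norm_sub_le _ _).trans_eq ?_
        simp only [norm_mul, Complex.norm_I, hA, hB, Complex.norm_exp_I_mul_ofReal, one_mul]
    _ ≤ ((1 - p) * t) ^ 2 / 2 + (-p * t) ^ 2 / 2 :=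
        add_le_add (norm_cexp_I_mul_sub_one_sub_le _) (norm_cexp_I_mul_sub_one_sub_le _)
    _ = (p ^ 2 + (1 - p) ^ 2) / 2 * t ^ 2 := by ring

theorem hasDerivAt_exp_mul_sq (c t : ℝ) :
    HasDerivAt (fun s : ℝ => rexp (c / 2 * s ^ 2)) (c * t * rexp (c / 2 * t ^ 2)) t := by
  refine ((hasDerivAt_pow 2 t).const_mul (c / 2)).exp.congr_deriv ?_
  push_cast
  ring

theorem norm_bernoulliCharFun_mul_exp_sub_one_le (hp : p ∈ Set.Icc (0 : ℝ) 1) (ht : 0 ≤ t) :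
    ‖bernoulliCharFun p t * rexp (p * (1 - p) / 2 * t ^ 2) - 1‖ ≤
      p * (1 - p) * (p ^ 2 + (1 - p) ^ 2) / 6 * t ^ 3 * rexp (p * (1 - p) / 2 * t ^ 2) := by
  have hpq : 0 ≤ p * (1 - p) := mul_nonneg hp.1 (sub_nonneg.2 hp.2)
  set w := p * (1 - p) with hw
  set c := w * (p ^ 2 + (1 - p) ^ 2) / 6 with hc
  have hf (x : ℝ) := ((hasDerivAt_bernoulliCharFun p x).mul
    (hasDerivAt_exp_mul_sq w x).ofReal_comp).sub_const 1
  have hB (x : ℝ) := ((hasDerivAt_pow 3 x).const_mul c).mul (hasDerivAt_exp_mul_sq w x)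
  refine image_norm_le_of_norm_deriv_right_le_deriv_boundary (a := 0)
    (fun x _ => (hf x).continuousAt.continuousWithinAt)
    (fun x _ => (hf x).hasDerivWithinAt) (by simp [bernoulliCharFun]) hB (fun x hx => ?_)
    ⟨ht, le_rfl⟩
  have hx0 : 0 ≤ x := hx.1
  set e := rexp (w / 2 * x ^ 2)
  calc _ = ‖((w * e : ℝ) : ℂ) *
          (I * (cexp (I * ↑((1 - p) * x)) - cexp (I * ↑(-p * x))) +
            x * bernoulliCharFun p x)‖ := by
        congr 1
        rw [hw]
        push_cast
        ring
    _ ≤ w * e * ((p ^ 2 + (1 - p) ^ 2) / 2 * x ^ 2) := by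
        rw [norm_mul, Complex.norm_real, norm_of_nonneg (by positivity)]
        gcongr
        exact norm_I_mul_sub_add_mul_bernoulliCharFun_le p x
    _ = c * (3 * x ^ 2) * e := by rw [hc]; ring
    _ ≤ c * (3 * x ^ 2) * e + c * x ^ 3 * (w * x * e) := le_add_of_nonneg_right (by positivity)
    _ = _ := by norm_num

theorem norm_bernoulliCharFun_sub_exp_le (hp : p ∈ Set.Icc (0 : ℝ) 1) :
    ‖bernoulliCharFun p t - rexp (-(p * (1 - p) / 2 * t ^ 2))‖ ≤
      p * (1 - p) * (p ^ 2 + (1 - p) ^ 2) / 6 * |t| ^ 3 := by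
  wlog ht : 0 ≤ t generalizing t
  · have h := this (t := -t) (by linarith)
    rw [← Complex.norm_conj] at h
    simpa [conj_bernoulliCharFun, ← Complex.exp_conj, Complex.conj_ofNat] using h
  set E := rexp (p * (1 - p) / 2 * t ^ 2)
  have hE : 0 < E := exp_pos _
  have hfactor : bernoulliCharFun p t - (E⁻¹ : ℝ) = (bernoulliCharFun p t * E - 1) / E := by
    have : (E : ℂ) ≠ 0 := by exact_mod_cast hE.ne'
    push_cast
    field_simp
  rw [Real.exp_neg, hfactor, norm_div, Complex.norm_real, norm_of_nonneg hE.le, div_le_iff₀ hE,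
    abs_of_nonneg ht]
  exact norm_bernoulliCharFun_mul_exp_sub_one_le hp ht

end BernoulliCharFun

section FourierIntegrals

theorem integral_cexp_I_mul_int_mul (l : ℤ) :
    ∫ t in (-π)..π, cexp (I * l * t) = if l = 0 then 2 * (π : ℂ) else 0 := by
  split_ifs with hl
  · simp [hl, two_mul]
  · rw [integral_exp_mul_complex (mul_ne_zero Complex.I_ne_zero (by exact_mod_cast hl)),
      div_eq_zero_iff, sub_eq_zero, Complex.exp_eq_exp_iff_exists_int]
    exact Or.inl ⟨l, by push_cast; ring⟩

theorem integral_cexp_mul_add_mul_cexp_pow (a b : ℂ) (m j : ℕ) :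
    ∫ t in (-π)..π, cexp (I * ↑(-(j * t))) * (a + b * cexp (I * t)) ^ m =
      2 * π * (m.choose j * b ^ j * a ^ (m - j)) := by
  have hexpand (t : ℝ) : cexp (I * ↑(-(j * t))) * (a + b * cexp (I * t)) ^ m =
      ∑ i ∈ Finset.range (m + 1),
        (m.choose i * b ^ i * a ^ (m - i)) * cexp (I * ((i - j : ℤ) : ℂ) * t) := by
    rw [add_comm a, add_pow, Finset.mul_sum]
    refine Finset.sum_congr rfl fun i _ => ?_
    have hexp : cexp (I * ((i - j : ℤ) : ℂ) * t) =
        cexp (I * ↑(-(j * t))) * cexp (I * t) ^ i := by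
      rw [← Complex.exp_nat_mul, ← Complex.exp_add]
      push_cast
      ring_nf
    rw [hexp, mul_pow]
    ring
  simp_rw [hexpand]
  rw [intervalIntegral.integral_finsetSum fun i _ =>
    Continuous.intervalIntegrable (by fun_prop) _ _]
  simp_rw [intervalIntegral.integral_const_mul, integral_cexp_I_mul_int_mul, sub_eq_zero,
    Nat.cast_inj, mul_ite, mul_zero]
  rw [Finset.sum_ite_eq']
  split_ifs with hj
  · ring
  · rw [Nat.choose_eq_zero_of_lt (by simpa using hj)]
    simp

theorem eval_bernsteinPolynomial (m j : ℕ) (p : ℝ) :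
    (bernsteinPolynomial ℝ m j).eval p = m.choose j * p ^ j * (1 - p) ^ (m - j) := by
  simp [bernsteinPolynomial]

/-- The frequency `j + 1 - (m + 1) p` is that of `m + 1` trials of which the last one is a
success; the factor `exp(i (1 - p) t)` accounts for that success. -/
theorem integral_bernoulliCharFun_pow (p : ℝ) (m j : ℕ) :
    ∫ t in (-π)..π, cexp (I * ↑(-((j + 1 - (m + 1) * p) * t))) *
        (cexp (I * ↑((1 - p) * t)) * bernoulliCharFun p t ^ m) =
      ↑(2 * π * (bernsteinPolynomial ℝ m j).eval p) := by
  have hintegrand (t : ℝ) : cexp (I * ↑(-((j + 1 - (m + 1) * p) * t))) *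
        (cexp (I * ↑((1 - p) * t)) * bernoulliCharFun p t ^ m) =
      cexp (I * ↑(-(j * t))) * ((1 - p) + p * cexp (I * t)) ^ m := by
    rw [bernoulliCharFun_eq_cexp_mul, mul_pow, ← Complex.exp_nat_mul, ← mul_assoc, ← mul_assoc,
      ← Complex.exp_add, ← Complex.exp_add]
    congr 2
    push_cast
    ring
  simp_rw [hintegrand]
  rw [integral_cexp_mul_add_mul_cexp_pow, eval_bernsteinPolynomial]
  push_cast
  ring

theorem gaussianPDFReal_zero_one (x : ℝ) : φ x = (√(2 * π))⁻¹ * rexp (-x ^ 2 / 2) := by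
  simp [gaussianPDFReal]

theorem integral_cexp_mul_exp_neg_mul_sq {s : ℝ} (hs : 0 < s) (y : ℝ) :
    ∫ t : ℝ, cexp (I * ↑(-(y * t))) * rexp (-(s / 2 * t ^ 2)) =
      ↑(2 * π * (φ (y / √s) / √s)) := by
  have hintegrand (t : ℝ) : cexp (I * ↑(-(y * t))) * rexp (-(s / 2 * t ^ 2)) =
      cexp (I * (-y : ℂ) * t) * cexp (-((s / 2 : ℝ) : ℂ) * t ^ 2) := by
    push_cast
    ring_nf
  have hsqrt : √(π / (s / 2)) = 2 * π * ((√(2 * π))⁻¹ / √s) := by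
    rw [show π / (s / 2) = 2 * π / s by field_simp, sqrt_div (by positivity)]
    field_simp
    exact sq_sqrt (by positivity)
  have hexp : (-y : ℂ) ^ 2 / (4 * ((s / 2 : ℝ) : ℂ)) = ((y / √s) ^ 2 / 2 : ℝ) := by
    rw [div_pow, sq_sqrt hs.le]
    push_cast
    field_simp
    ring
  simp_rw [hintegrand]
  rw [fourierIntegral_gaussian (by rw [Complex.ofReal_re]; positivity), neg_div, hexp,
    ← Complex.ofReal_div, ← Complex.ofReal_one, ← Complex.ofReal_ofNat, ← Complex.ofReal_div,
    ← Complex.ofReal_cpow (by positivity), ← sqrt_eq_rpow, hsqrt, gaussianPDFReal_zero_one,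
    ← Complex.ofReal_neg, ← Complex.ofReal_exp, ← Complex.ofReal_mul]
  congr 1
  ring_nf

theorem norm_intervalIntegral_sub_integral_le {E : Type*} [NormedAddCommGroup E]
    [NormedSpace ℝ E] {f g : ℝ → E} {h : ℝ → ℝ} {a b : ℝ} (hab : a ≤ b)
    (hf : IntervalIntegrable f volume a b) (hg : Integrable g) (hh : Integrable h)
    (hin : ∀ t ∈ Set.Ioc a b, ‖f t - g t‖ ≤ h t) (hout : ∀ t ∉ Set.Ioc a b, ‖g t‖ ≤ h t) :
    ‖(∫ t in a..b, f t) - ∫ t, g t‖ ≤ ∫ t, h t := by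
  have hf' : Integrable ((Set.Ioc a b).indicator f) :=
    ((intervalIntegrable_iff_integrableOn_Ioc_of_le hab).1 hf).integrable_indicator
      measurableSet_Ioc
  rw [intervalIntegral.integral_of_le hab, ← integral_indicator measurableSet_Ioc,
    ← integral_sub hf' hg]
  refine norm_integral_le_of_norm_le hh (.of_forall fun t => ?_)
  by_cases ht : t ∈ Set.Ioc a b
  · simpa [ht] using hin t ht
  · simpa [ht] using hout t ht

/-- The integrand of an absolute moment of the Gaussian `exp(-c t²)`, used as a building block of
error majorants. -/
noncomputable def absPowGaussian (c : ℝ) (k : ℕ) (t : ℝ) : ℝ :=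
  |t| ^ k * rexp (-(c * t ^ 2))

theorem integrable_absPowGaussian {c : ℝ} (hc : 0 < c) (k : ℕ) :
    Integrable (absPowGaussian c k) := by
  refine (integrable_rpow_mul_exp_neg_mul_sq hc (s := k) ?_).norm.congr (.of_forall fun t => ?_)
  · linarith [k.cast_nonneg (α := ℝ)]
  · simp [absPowGaussian]

theorem integral_absPowGaussian_odd {c : ℝ} (hc : 0 < c) (j : ℕ) :
    ∫ t, absPowGaussian c (2 * j + 1) t = j.factorial / c ^ (j + 1) := by
  have habs := integral_comp_abs (f := fun t : ℝ => t ^ (2 * j + 1) * rexp (-(c * t ^ 2)))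
  have hΓ := integral_rpow_mul_exp_neg_mul_rpow (q := (2 * j + 1 : ℕ)) two_pos
    (by linarith [(2 * j + 1).cast_nonneg (α := ℝ)]) hc
  rw [show (((2 * j + 1 : ℕ) : ℝ) + 1) / 2 = j + 1 by push_cast; ring,
    show -(((2 * j + 1 : ℕ) : ℝ) + 1) / 2 = -((j + 1 : ℕ) : ℝ) by push_cast; ring,
    Gamma_nat_eq_factorial, rpow_neg hc.le, rpow_natCast] at hΓ
  simp only [rpow_natCast, rpow_two, neg_mul] at hΓ
  simp only [sq_abs] at habs
  simp only [absPowGaussian]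
  rw [habs, hΓ]
  ring

end FourierIntegrals

section ErrorMajorant

variable {p t : ℝ}

theorem norm_pow_sub_pow_le {R : Type*} [NormedCommRing R] [NormOneClass R] (a b : R) (m : ℕ) :
    ‖a ^ m - b ^ m‖ ≤ (∑ i ∈ Finset.range m, ‖a‖ ^ i * ‖b‖ ^ (m - 1 - i)) * ‖a - b‖ := by
  rw [← geom_sum₂_mul]
  refine (norm_mul_le _ _).trans ?_
  gcongr
  refine (norm_sum_le _ _).trans (Finset.sum_le_sum fun i _ => ?_)
  exact (norm_mul_le _ _).trans (by gcongr <;> exact norm_pow_le _ _)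

theorem exp_neg_half_mul_sq_pow (w t : ℝ) (m : ℕ) :
    rexp (-(w / 2 * t ^ 2)) ^ m = rexp (-(m * w / 2 * t ^ 2)) := by
  rw [← exp_nat_mul]
  ring_nf

/-- The decay rate of `|f| ^ i * |g| ^ (m - 1 - i)` for `|f t| ≤ exp(-w t² / 5)` and
`|g t| ≤ exp(-w t² / 2)`; these are the factors in the telescoping of `f ^ m - g ^ m`. -/
noncomputable def powDiffRate (w : ℝ) (m i : ℕ) : ℝ :=
  i * (w / 5) + ((m - 1 - i : ℕ) : ℝ) * (w / 2)

theorem powDiffRate_pos {w : ℝ} (hw : 0 < w) {m : ℕ} (hm : 2 ≤ m) (i : ℕ) :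
    0 < powDiffRate w m i := by
  rcases i.eq_zero_or_pos with rfl | hi
  · have : (0 : ℝ) < (m - 1 - 0 : ℕ) := by exact_mod_cast (by lia : 0 < m - 1 - 0)
    unfold powDiffRate
    positivity
  · unfold powDiffRate
    positivity

theorem norm_bernoulliCharFun_pow_sub_exp_le (hp : p ∈ Set.Icc (0 : ℝ) 1) (ht : |t| ≤ π)
    (m : ℕ) :
    ‖bernoulliCharFun p t ^ m - rexp (-(m * (p * (1 - p)) / 2 * t ^ 2))‖ ≤
      p * (1 - p) * (p ^ 2 + (1 - p) ^ 2) / 6 *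
        ∑ i ∈ Finset.range m, absPowGaussian (powDiffRate (p * (1 - p)) m i) 3 t := by
  have hfactor (i : ℕ) : ‖bernoulliCharFun p t‖ ^ i *
      ‖(rexp (-(p * (1 - p) / 2 * t ^ 2)) : ℂ)‖ ^ (m - 1 - i) ≤
        rexp (-(powDiffRate (p * (1 - p)) m i * t ^ 2)) := by
    rw [Complex.norm_real, norm_of_nonneg (exp_pos _).le, exp_neg_half_mul_sq_pow]
    refine (mul_le_mul_of_nonneg_right (norm_bernoulliCharFun_pow_le hp ht i)
      (exp_pos _).le).trans_eq ?_
    rw [← exp_add, powDiffRate]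
    ring_nf
  rw [← exp_neg_half_mul_sq_pow, Complex.ofReal_pow]
  refine (norm_pow_sub_pow_le _ _ m).trans ((mul_le_mul
    (Finset.sum_le_sum fun i _ => hfactor i) (norm_bernoulliCharFun_sub_exp_le hp)
    (norm_nonneg _) (Finset.sum_nonneg fun i _ => (exp_pos _).le)).trans_eq ?_)
  simp only [absPowGaussian, ← Finset.mul_sum]
  ring

/-- The term `w t² / 2` is split by AM-GM, so that only odd absolute moments, which are rational
functions of the rate, have to be integrated later. -/
theorem norm_cexp_I_mul_sub_exp_le {q w : ℝ} (hq : 0 ≤ q) (hw : 0 ≤ w) (t : ℝ) :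
    ‖cexp (I * ↑(q * t)) - rexp (-(w / 2 * t ^ 2))‖ ≤
      (q + w / 2) * |t| + w / 8 * |t| ^ 3 := by
  have hexp : ‖cexp (I * ↑(q * t)) - 1‖ ≤ q * |t| := by
    simpa [abs_of_nonneg hq] using norm_exp_I_mul_ofReal_sub_one_le (x := q * t)
  have hgauss : ‖(1 : ℂ) - rexp (-(w / 2 * t ^ 2))‖ ≤ w / 2 * t ^ 2 := by
    have hle : rexp (-(w / 2 * t ^ 2)) ≤ 1 := exp_le_one_iff.2 (neg_nonpos.2 (by positivity))
    rw [← Complex.ofReal_one, ← Complex.ofReal_sub, Complex.norm_real,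
      norm_of_nonneg (sub_nonneg.2 hle)]
    linarith [add_one_le_exp (-(w / 2 * t ^ 2))]
  have hAMGM : t ^ 2 ≤ |t| + |t| ^ 3 / 4 := by
    rw [← sq_abs]
    linarith [mul_nonneg (abs_nonneg t) (sq_nonneg (|t| - 2))]
  calc _ ≤ q * |t| + w / 2 * t ^ 2 :=
        (norm_sub_le_norm_sub_add_norm_sub _ 1 _).trans (add_le_add hexp hgauss)
    _ ≤ q * |t| + w / 2 * (|t| + |t| ^ 3 / 4) := by gcongr
    _ = (q + w / 2) * |t| + w / 8 * |t| ^ 3 := by ring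

theorem exp_neg_mul_sq_le_absPowGaussian_three (c : ℝ) (ht : π ≤ |t|) :
    rexp (-(c * t ^ 2)) ≤ 1 / 30 * absPowGaussian c 3 t := by
  have hpow : 30 ≤ |t| ^ 3 := calc
    (30 : ℝ) ≤ 3.14 ^ 3 := by norm_num
    _ ≤ |t| ^ 3 := pow_le_pow_left₀ (by norm_num) (pi_gt_d2.le.trans ht) 3
  unfold absPowGaussian
  linarith [mul_le_mul_of_nonneg_right hpow (exp_pos (-(c * t ^ 2))).le]

/-- An integrable majorant for the distance between `exp(i (1 - p) t) * f(t) ^ m`, cut off outside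
`[-π, π]`, and its Gaussian approximation `exp(-(m + 1) p (1 - p) t² / 2)`, where
`f = bernoulliCharFun p`. The last summand is for `|t| ≥ π`. -/
noncomputable def charFunErrorMajorant (p : ℝ) (m : ℕ) (t : ℝ) : ℝ :=
  p * (1 - p) * (p ^ 2 + (1 - p) ^ 2) / 6 *
      ∑ i ∈ Finset.range m, absPowGaussian (powDiffRate (p * (1 - p)) m i) 3 t +
    ((1 - p + p * (1 - p) / 2) * absPowGaussian (m * (p * (1 - p)) / 2) 1 t +
      p * (1 - p) / 8 * absPowGaussian (m * (p * (1 - p)) / 2) 3 t) +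
    1 / 30 * absPowGaussian ((m + 1) * (p * (1 - p)) / 2) 3 t

theorem norm_mul_bernoulliCharFun_pow_sub_exp_le (hp : p ∈ Set.Icc (0 : ℝ) 1) (ht : |t| ≤ π)
    (m : ℕ) :
    ‖cexp (I * ↑((1 - p) * t)) * bernoulliCharFun p t ^ m -
        rexp (-((m + 1) * (p * (1 - p)) / 2 * t ^ 2))‖ ≤ charFunErrorMajorant p m t := by
  have hq : 0 ≤ 1 - p := sub_nonneg.2 hp.2
  have hpq : 0 ≤ p * (1 - p) := mul_nonneg hp.1 hq
  set w := p * (1 - p) with hw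
  set A := cexp (I * ↑((1 - p) * t)) with hA
  set g : ℕ → ℝ := fun n => rexp (-(n * w / 2 * t ^ 2)) with hg
  have hsplit : A * bernoulliCharFun p t ^ m - rexp (-((m + 1) * w / 2 * t ^ 2)) =
      A * (bernoulliCharFun p t ^ m - g m) + (A - rexp (-(w / 2 * t ^ 2))) * g m := by
    have hexp : rexp (-((m + 1) * w / 2 * t ^ 2)) = rexp (-(w / 2 * t ^ 2)) * g m := by
      rw [hg, ← exp_add]
      ring_nf
    rw [hexp, Complex.ofReal_mul]
    ring
  have hgauss : 0 ≤ absPowGaussian ((m + 1) * w / 2) 3 t := by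
    unfold absPowGaussian
    positivity
  calc _ ≤ ‖bernoulliCharFun p t ^ m - g m‖ + ‖A - rexp (-(w / 2 * t ^ 2))‖ * g m := by
        rw [hsplit]
        refine (norm_add_le _ _).trans_eq ?_
        rw [norm_mul, norm_mul, hA, Complex.norm_exp_I_mul_ofReal, one_mul, Complex.norm_real,
          norm_of_nonneg (exp_pos _).le]
    _ ≤ w * (p ^ 2 + (1 - p) ^ 2) / 6 *
          ∑ i ∈ Finset.range m, absPowGaussian (powDiffRate w m i) 3 t +
        ((1 - p + w / 2) * |t| + w / 8 * |t| ^ 3) * g m :=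
      add_le_add (norm_bernoulliCharFun_pow_sub_exp_le hp ht m) (mul_le_mul_of_nonneg_right
        (norm_cexp_I_mul_sub_exp_le hq hpq t) (exp_pos _).le)
    _ ≤ charFunErrorMajorant p m t := by
      rw [charFunErrorMajorant, ← hw]
      simp only [absPowGaussian, hg] at hgauss ⊢
      linarith

theorem exp_neg_mul_sq_le_charFunErrorMajorant (hp : p ∈ Set.Icc (0 : ℝ) 1) (ht : π ≤ |t|)
    (m : ℕ) :
    rexp (-((m + 1) * (p * (1 - p)) / 2 * t ^ 2)) ≤ charFunErrorMajorant p m t := by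
  have hq : 0 ≤ 1 - p := sub_nonneg.2 hp.2
  have hp0 := hp.1
  refine (exp_neg_mul_sq_le_absPowGaussian_three _ ht).trans (le_add_of_nonneg_left ?_)
  unfold absPowGaussian
  positivity

theorem integrable_charFunErrorMajorant (hp : p ∈ Set.Ioo (0 : ℝ) 1) {m : ℕ} (hm : 2 ≤ m) :
    Integrable (charFunErrorMajorant p m) := by
  have hw : 0 < p * (1 - p) := mul_pos hp.1 (sub_pos.2 hp.2)
  have : (0 : ℝ) < m := by positivity
  exact (((integrable_finsetSum _ fun i _ =>
    integrable_absPowGaussian (powDiffRate_pos hw hm i) 3).const_mul _).add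
      (((integrable_absPowGaussian (by positivity) 1).const_mul _).add
        ((integrable_absPowGaussian (by positivity) 3).const_mul _))).add
    ((integrable_absPowGaussian (by positivity) 3).const_mul _)

theorem integral_charFunErrorMajorant (hp : p ∈ Set.Ioo (0 : ℝ) 1) {m : ℕ} (hm : 2 ≤ m) :
    ∫ t, charFunErrorMajorant p m t =
      p * (1 - p) * (p ^ 2 + (1 - p) ^ 2) / 6 *
          ∑ i ∈ Finset.range m, 1 / powDiffRate (p * (1 - p)) m i ^ 2 +
        ((1 - p + p * (1 - p) / 2) * (1 / (m * (p * (1 - p)) / 2)) +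
          p * (1 - p) / 8 * (1 / (m * (p * (1 - p)) / 2) ^ 2)) +
        1 / 30 * (1 / ((m + 1) * (p * (1 - p)) / 2) ^ 2) := by
  have hw : 0 < p * (1 - p) := mul_pos hp.1 (sub_pos.2 hp.2)
  have : (0 : ℝ) < m := by positivity
  have hone {c : ℝ} (hc : 0 < c) : ∫ t, absPowGaussian c 1 t = 1 / c := by
    simpa using integral_absPowGaussian_odd hc 0
  have hthree {c : ℝ} (hc : 0 < c) : ∫ t, absPowGaussian c 3 t = 1 / c ^ 2 := by
    simpa using integral_absPowGaussian_odd hc 1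
  have hint (i : ℕ) := integrable_absPowGaussian (powDiffRate_pos hw hm i) 3
  have : Integrable fun t =>
      ∑ i ∈ Finset.range m, absPowGaussian (powDiffRate (p * (1 - p)) m i) 3 t :=
    integrable_finsetSum _ fun i _ => hint i
  have hlin := integrable_absPowGaussian (c := m * (p * (1 - p)) / 2) (by positivity) 1
  have hcube := integrable_absPowGaussian (c := m * (p * (1 - p)) / 2) (by positivity) 3
  have htail := integrable_absPowGaussian (c := (m + 1) * (p * (1 - p)) / 2) (by positivity) 3
  unfold charFunErrorMajorant
  rw [integral_add (by fun_prop) (by fun_prop), integral_add (by fun_prop) (by fun_prop),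
    integral_add (by fun_prop) (by fun_prop)]
  simp only [integral_const_mul]
  rw [integral_finsetSum _ fun i _ => hint i,
    Finset.sum_congr rfl fun i _ => hthree (powDiffRate_pos hw hm i),
    hone (by positivity), hthree (by positivity), hthree (by positivity)]

end ErrorMajorant

section LocalLimit

variable {p : ℝ}

theorem two_pi_mul_eval_bernsteinPolynomial_le (hp : p ∈ Set.Ioo (0 : ℝ) 1) {m : ℕ} (hm : m ≠ 0)
    (j : ℕ) :
    2 * π * (bernsteinPolynomial ℝ m j).eval p ≤ √(π / (m * (p * (1 - p) / 5))) := by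
  set c := m * (p * (1 - p) / 5) with hc
  have hc0 : 0 < c := by
    have := sub_pos.2 hp.2
    have := hp.1
    positivity
  have hint : Integrable fun t : ℝ => rexp (-c * t ^ 2) := integrable_exp_neg_mul_sq hc0
  calc 2 * π * (bernsteinPolynomial ℝ m j).eval p
      ≤ ‖((2 * π * (bernsteinPolynomial ℝ m j).eval p : ℝ) : ℂ)‖ := by
        rw [Complex.norm_real]
        exact le_norm_self _
    _ ≤ ∫ t in (-π)..π, rexp (-c * t ^ 2) := by
      rw [← integral_bernoulliCharFun_pow]
      refine intervalIntegral.norm_integral_le_of_norm_le (by linarith [pi_pos])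
        (.of_forall fun t ht => ?_) hint.intervalIntegrable
      rw [norm_mul, norm_mul, Complex.norm_exp_I_mul_ofReal, Complex.norm_exp_I_mul_ofReal,
        one_mul, one_mul, norm_pow, neg_mul, hc]
      exact norm_bernoulliCharFun_pow_le (Set.Ioo_subset_Icc_self hp)
        (abs_le.2 ⟨ht.1.le, ht.2⟩) m
    _ ≤ ∫ t, rexp (-c * t ^ 2) := by
      rw [intervalIntegral.integral_of_le (by linarith [pi_pos])]
      exact setIntegral_le_integral hint (.of_forall fun t => (exp_pos _).le)
    _ = √(π / c) := integral_gaussian c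

theorem abs_eval_bernsteinPolynomial_sub_gaussian_le (hp : p ∈ Set.Ioo (0 : ℝ) 1) {m : ℕ}
    (hm : 2 ≤ m) (j : ℕ) :
    |2 * π * (bernsteinPolynomial ℝ m j).eval p -
        2 * π * (φ ((j + 1 - (m + 1) * p) / √((m + 1) * (p * (1 - p)))) /
          √((m + 1) * (p * (1 - p))))| ≤
      ∫ t, charFunErrorMajorant p m t := by
  have hp' : p ∈ Set.Icc (0 : ℝ) 1 := Set.Ioo_subset_Icc_self hp
  have hs : 0 < (m + 1) * (p * (1 - p)) := by
    have := sub_pos.2 hp.2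
    have := hp.1
    positivity
  have hcont := continuous_bernoulliCharFun p
  have hgauss : Integrable fun t : ℝ => cexp (I * ↑(-((j + 1 - (m + 1) * p) * t))) *
      rexp (-((m + 1) * (p * (1 - p)) / 2 * t ^ 2)) := by
    have hexp := (integrable_exp_neg_mul_sq (half_pos hs)).ofReal (𝕜 := ℂ)
    simp only [neg_mul] at hexp
    exact hexp.bdd_mul (Continuous.aestronglyMeasurable (by fun_prop))
      (.of_forall fun t => (Complex.norm_exp_I_mul_ofReal _).le)
  rw [← norm_eq_abs, ← Complex.norm_real, Complex.ofReal_sub, ← integral_bernoulliCharFun_pow,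
    ← integral_cexp_mul_exp_neg_mul_sq hs]
  refine norm_intervalIntegral_sub_integral_le (by linarith [pi_pos])
    (Continuous.intervalIntegrable (by fun_prop) _ _) hgauss
    (integrable_charFunErrorMajorant hp hm) (fun t ht => ?_) fun t ht => ?_
  · rw [← mul_sub, norm_mul, Complex.norm_exp_I_mul_ofReal, one_mul]
    exact norm_mul_bernoulliCharFun_pow_sub_exp_le hp' (abs_le.2 ⟨ht.1.le, ht.2⟩) m
  · rw [norm_mul, Complex.norm_exp_I_mul_ofReal, one_mul, Complex.norm_real,
      norm_of_nonneg (exp_pos _).le]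
    refine exp_neg_mul_sq_le_charFunErrorMajorant hp' ?_ m
    by_contra! hlt
    exact ht ⟨(abs_lt.1 hlt).1, (abs_lt.1 hlt).2.le⟩

end LocalLimit

section ErrorConstant

variable {p : ℝ} {m : ℕ}

-- A midpoint-rule comparison of the sum with the integral of `1 / x ^ 2` over `[a, a + d * M]`.
theorem sum_range_one_div_sq_le {a d : ℝ} (ha : 0 < a) (hd : 0 ≤ d) (M : ℕ) :
    ∑ i ∈ Finset.range M, 1 / (a + d / 2 + d * i) ^ 2 ≤ M / (a * (a + d * M)) := by
  induction M with
  | zero => simp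
  | succ M ih =>
    have : 0 < a + d * M := by positivity
    have htelescope : ((M + 1 : ℕ) : ℝ) / (a * (a + d * (M + 1 : ℕ))) - M / (a * (a + d * M)) =
        1 / ((a + d * M) * (a + d * M + d)) := by
      have : a + d * (M + 1) ≠ 0 := by positivity
      have : a + d * M + d ≠ 0 := by positivity
      push_cast
      field_simp
      ring
    have hterm : 1 / (a + d / 2 + d * M) ^ 2 ≤ 1 / ((a + d * M) * (a + d * M + d)) :=
      one_div_le_one_div_of_le (by positivity) (by nlinarith [sq_nonneg d])
    rw [Finset.sum_range_succ]
    linarith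

theorem sum_range_one_div_powDiffRate_sq_le {w : ℝ} (hw : 0 < w) (hm : 2 ≤ m) :
    ∑ i ∈ Finset.range m, 1 / powDiffRate w m i ^ 2 ≤
      4 / w ^ 2 * (m / ((2 / 5 * m - 7 / 10) * (m - 7 / 10))) := by
  have hm' : (2 : ℝ) ≤ m := by exact_mod_cast hm
  have hrate (i : ℕ) (hi : i ∈ Finset.range m) : 1 / powDiffRate w m (m - 1 - i) ^ 2 =
      4 / w ^ 2 * (1 / (2 / 5 * m - 7 / 10 + 3 / 5 / 2 + 3 / 5 * i) ^ 2) := by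
    have hi' : i + 1 ≤ m := Finset.mem_range.1 hi
    have hreflect : powDiffRate w m (m - 1 - i) =
        w / 2 * (2 / 5 * m - 7 / 10 + 3 / 5 / 2 + 3 / 5 * i) := by
      rw [powDiffRate, show m - 1 - (m - 1 - i) = i by lia, Nat.sub_sub, add_comm 1 i,
        Nat.cast_sub hi']
      push_cast
      ring
    rw [hreflect, mul_pow, div_pow, ← one_div_mul_one_div, one_div_div]
    norm_num
  have hsum := sum_range_one_div_sq_le (a := 2 / 5 * m - 7 / 10) (d := 3 / 5) (by linarith)
    (by norm_num) m
  rw [show (2 / 5 * m - 7 / 10 + 3 / 5 * m : ℝ) = m - 7 / 10 by ring] at hsum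
  rw [← Finset.sum_range_reflect, Finset.sum_congr rfl hrate, ← Finset.mul_sum]
  exact mul_le_mul_of_nonneg_left hsum (by positivity)

/-- A bound for half of `(m + 1) p (1 - p) ∫ t, charFunErrorMajorant p m t`. The two summands come
from the telescoping of `f ^ m - g ^ m` and from `exp(i (1 - p) t) - g(t)`; the tail contribution
is absorbed in `p ^ 2 / 10`. -/
noncomputable def errorFactor (p : ℝ) (m : ℕ) : ℝ :=
  (p ^ 2 + (1 - p) ^ 2) * ((m + 1) * (m / ((2 / 5 * m - 7 / 10) * (m - 7 / 10))) / 3) +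
    (m + 1) / m * (1 - p + p * (1 - p) / 2 + 1 / (4 * m) + p ^ 2 / 10)

theorem mul_integral_charFunErrorMajorant_le_errorFactor (hp : p ∈ Set.Ioo (0 : ℝ) 1)
    (hm : 2 ≤ m) (h : 0.669 * m < (m + 1) ^ 2 * (p ^ 3 * (1 - p))) :
    (m + 1) * (p * (1 - p)) * ∫ t, charFunErrorMajorant p m t ≤ 2 * errorFactor p m := by
  have hp0 := hp.1
  have hq := sub_pos.2 hp.2
  have hm0 : (0 : ℝ) < m := by positivity
  have hsum := sum_range_one_div_powDiffRate_sq_le (mul_pos hp0 hq) hm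
  have htail : 1 / (15 * ((m + 1) * (p * (1 - p)))) ≤ (m + 1) / m * (p ^ 2 / 10) := by
    rw [div_mul_div_comm, div_le_div_iff₀ (by positivity) (by positivity)]
    linarith
  rw [errorFactor]
  set R : ℝ := m / ((2 / 5 * m - 7 / 10) * (m - 7 / 10))
  calc (m + 1) * (p * (1 - p)) * ∫ t, charFunErrorMajorant p m t
      ≤ (m + 1) * (p * (1 - p)) *
        (p * (1 - p) * (p ^ 2 + (1 - p) ^ 2) / 6 * (4 / (p * (1 - p)) ^ 2 * R) +
        ((1 - p + p * (1 - p) / 2) * (1 / (m * (p * (1 - p)) / 2)) +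
          p * (1 - p) / 8 * (1 / (m * (p * (1 - p)) / 2) ^ 2)) +
        1 / 30 * (1 / ((m + 1) * (p * (1 - p)) / 2) ^ 2)) := by
        rw [integral_charFunErrorMajorant hp hm]
        gcongr
    _ = 2 * ((p ^ 2 + (1 - p) ^ 2) * ((m + 1) * R / 3) +
        (m + 1) / m * (1 - p + p * (1 - p) / 2 + 1 / (4 * m)) +
        1 / (15 * ((m + 1) * (p * (1 - p))))) := by
      field_simp
      ring
    _ ≤ _ := by linarith

theorem cube_mul_one_sub_le (p : ℝ) : p ^ 3 * (1 - p) ≤ 27 / 256 := by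
  linarith [mul_nonneg (sq_nonneg (p - 3 / 4))
    (by linarith [sq_nonneg (p + 1 / 4)] : 0 ≤ p ^ 2 + p / 2 + 3 / 16)]

theorem cube_mul_one_sub_le_of_le (hp : 0.89 ≤ p) (hp1 : p ≤ 1) : p ^ 3 * (1 - p) ≤ 0.078 := by
  nlinarith [mul_nonneg (sub_nonneg.2 hp) (sq_nonneg p),
    mul_nonneg (sub_nonneg.2 hp) (by linarith : 0 ≤ p), mul_nonneg (sub_nonneg.2 hp1) (sq_nonneg p)]

theorem five_le_of_lt_sq_mul_cube_mul (hm : m ≠ 0)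
    (h : 0.669 * m < (m + 1) ^ 2 * (p ^ 3 * (1 - p))) : 5 ≤ m := by
  by_contra! hlt
  have hc := cube_mul_one_sub_le p
  interval_cases m <;> norm_num at h hm <;> linarith

theorem mul_errorFactor_le_of_seven_le (hp : p ∈ Set.Icc (0 : ℝ) 1) (hm : 7 ≤ m) :
    p * errorFactor p m ≤ 1.621 := by
  obtain ⟨hp0, hp1⟩ := hp
  have hq := sub_nonneg.2 hp1
  have hm' : (7 : ℝ) ≤ m := by exact_mod_cast hm
  rw [errorFactor]
  have hcoeff : ((m : ℝ) + 1) * (m / ((2 / 5 * m - 7 / 10) * (m - 7 / 10))) ≤ 4.2334 := by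
    rw [← mul_div_assoc, div_le_iff₀ (mul_pos (by linarith) (by linarith))]
    nlinarith
  have hratio : ((m : ℝ) + 1) / m ≤ 8 / 7 := by
    rw [div_le_div_iff₀ (by linarith) (by norm_num)]
    linarith
  have hinv : 1 / (4 * (m : ℝ)) ≤ 1 / 28 := one_div_le_one_div_of_le (by norm_num) (by linarith)
  calc _ ≤ p * ((p ^ 2 + (1 - p) ^ 2) * (4.2334 / 3) +
        8 / 7 * (1 - p + p * (1 - p) / 2 + 1 / 28 + p ^ 2 / 10)) := by gcongr
    _ ≤ 1.621 := by
      nlinarith [mul_nonneg hq (sq_nonneg (p - 0.2176)), sq_nonneg p, mul_nonneg hp0 hq]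

theorem mul_errorFactor_le_of_lt_seven (hp : p ∈ Set.Ioo (0 : ℝ) 1) (hm : m ∈ Set.Ico 5 7)
    (h : 0.669 * m < (m + 1) ^ 2 * (p ^ 3 * (1 - p))) :
    p * errorFactor p m ≤ 1.621 := by
  obtain ⟨hp0, hp1⟩ := hp
  obtain ⟨hm5, hm7⟩ := hm
  have := sub_pos.2 hp1
  rw [errorFactor]
  have hp89 : p ≤ 0.89 := by
    by_contra! hlt
    have hc := cube_mul_one_sub_le_of_le hlt.le hp1.le
    interval_cases m <;> norm_num at h <;> linarith
  have hcoeff : ((m : ℝ) + 1) * (m / ((2 / 5 * m - 7 / 10) * (m - 7 / 10))) ≤ 5.367 := by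
    interval_cases m <;> norm_num
  have hratio : ((m : ℝ) + 1) / m ≤ 6 / 5 := by
    interval_cases m <;> norm_num
  have hinv : 1 / (4 * (m : ℝ)) ≤ 1 / 20 := by
    interval_cases m <;> norm_num
  calc _ ≤ p * ((p ^ 2 + (1 - p) ^ 2) * (5.367 / 3) +
        6 / 5 * (1 - p + p * (1 - p) / 2 + 1 / 20 + p ^ 2 / 10)) := by gcongr
    _ ≤ 1.621 := by
      nlinarith [mul_nonneg (sub_nonneg.2 hp89) (sq_nonneg (p - 0.2294)), sq_nonneg p,
        mul_nonneg hp0.le (sub_nonneg.2 hp89)]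

theorem mul_integral_charFunErrorMajorant_le (hp : p ∈ Set.Ioo (0 : ℝ) 1) (hm : m ≠ 0)
    (h : 0.669 * m < (m + 1) ^ 2 * (p ^ 3 * (1 - p))) :
    (m + 1) * (p * (1 - p)) * ∫ t, charFunErrorMajorant p m t ≤ 2 * π * (0.516 / p) := by
  have hm5 : 5 ≤ m := five_le_of_lt_sq_mul_cube_mul hm h
  have hbound : p * errorFactor p m ≤ 1.621 := by
    rcases lt_or_ge m 7 with hm7 | hm7
    · exact mul_errorFactor_le_of_lt_seven hp ⟨hm5, hm7⟩ h
    · exact mul_errorFactor_le_of_seven_le (Set.Ioo_subset_Icc_self hp) hm7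
  refine (mul_integral_charFunErrorMajorant_le_errorFactor hp (by lia) h).trans ?_
  rw [mul_assoc, mul_le_mul_iff_right₀ two_pos, ← mul_div_assoc, le_div_iff₀ hp.1]
  linarith [pi_gt_d4]

end ErrorConstant

section ScaledLocalLimit

variable {p : ℝ} {m : ℕ}

theorem gaussianPDFReal_zero_one_le (x : ℝ) : φ x ≤ 0.4 := by
  have hsqrt : 2.5 ≤ √(2 * π) := le_sqrt_of_sq_le (by linarith [pi_gt_d2])
  rw [gaussianPDFReal_zero_one]
  calc (√(2 * π))⁻¹ * rexp (-x ^ 2 / 2) ≤ 2.5⁻¹ * 1 := by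
        gcongr
        rw [exp_le_one_iff]
        linarith [sq_nonneg x]
    _ = 0.4 := by norm_num

theorem abs_mul_gaussianPDFReal_zero_one_le (x : ℝ) : |x| * φ x ≤ 0.242 := by
  have hexp : x ^ 2 * rexp (-x ^ 2) ≤ (rexp 1)⁻¹ := calc
    x ^ 2 * rexp (-x ^ 2) ≤ rexp (x ^ 2 - 1) * rexp (-x ^ 2) := by
      gcongr
      linarith [add_one_le_exp (x ^ 2 - 1)]
    _ = (rexp 1)⁻¹ := by
      rw [← exp_add, ← exp_neg]
      ring_nf
  refine le_of_sq_le_sq ?_ (by norm_num)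
  calc (|x| * φ x) ^ 2 = (2 * π)⁻¹ * (x ^ 2 * rexp (-x ^ 2)) := by
        rw [gaussianPDFReal_zero_one, mul_pow, mul_pow, inv_pow, sq_sqrt (by positivity), sq_abs,
          ← exp_nat_mul]
        ring_nf
    _ ≤ (2 * π)⁻¹ * (rexp 1)⁻¹ := by gcongr
    _ ≤ (2 * 3.1415)⁻¹ * 2.7182818283⁻¹ := by
      gcongr
      · exact pi_gt_d4.le
      · exact exp_one_gt_d9.le
    _ ≤ 0.242 ^ 2 := by norm_num

theorem abs_mul_mul_gaussianPDFReal_zero_one_le (hp : p ∈ Set.Icc (0 : ℝ) 1) (x : ℝ) :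
    |(1 - 2 * p) / 2 * (x * φ x)| ≤ 0.121 := by
  have hφ := gaussianPDFReal_nonneg 0 1 x
  calc |(1 - 2 * p) / 2 * (x * φ x)| = |(1 - 2 * p) / 2| * (|x| * φ x) := by
        rw [abs_mul, abs_mul x, abs_of_nonneg hφ]
    _ ≤ 1 / 2 * 0.242 :=
      mul_le_mul (abs_le.2 ⟨by linarith [hp.2], by linarith [hp.1]⟩)
        (abs_mul_gaussianPDFReal_zero_one_le x) (by positivity) (by norm_num)
    _ = 0.121 := by norm_num

theorem sqrt_mul_gaussianPDFReal_le {s : ℝ} (hp : 0 < p) (h : s * p ^ 2 ≤ 1) (x : ℝ) :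
    √s * φ x ≤ 0.516 / p := by
  have hsqrt : √s ≤ 1 / p := by
    rw [sqrt_le_left (by positivity), div_pow, one_pow]
    exact (le_div_iff₀ (by positivity)).2 h
  calc √s * φ x ≤ 1 / p * 0.4 :=
        mul_le_mul hsqrt (gaussianPDFReal_zero_one_le x) (gaussianPDFReal_nonneg _ _ _)
          (by positivity)
    _ ≤ 0.516 / p := by
      rw [div_mul_eq_mul_div]
      gcongr
      norm_num

theorem eval_bernsteinPolynomial_nonneg (hp : p ∈ Set.Icc (0 : ℝ) 1) (m j : ℕ) :
    0 ≤ (bernsteinPolynomial ℝ m j).eval p := by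
  have hp0 := hp.1
  have hq := sub_nonneg.2 hp.2
  rw [eval_bernsteinPolynomial]
  positivity

theorem mul_eval_bernsteinPolynomial_zero_le (hp : p ∈ Set.Ioo (0 : ℝ) 1) (j : ℕ) :
    p * (1 - p) * (bernsteinPolynomial ℝ 0 j).eval p ≤ 0.516 / p := by
  have hp0 := hp.1
  have heval : (bernsteinPolynomial ℝ 0 j).eval p ≤ 1 := by
    rcases j with _ | j <;> simp [bernsteinPolynomial]
  rw [le_div_iff₀ hp0]
  have := mul_le_mul_of_nonneg_left heval (mul_pos hp0 (sub_pos.2 hp.2)).le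
  nlinarith [hp.2, sq_nonneg (p - 1 / 2), mul_pos hp0 (sub_pos.2 hp.2)]

-- The threshold `0.669` is `4 * π * 0.516 ^ 2 / 5`, rounded down.
theorem mul_eval_bernsteinPolynomial_le (hp : p ∈ Set.Ioo (0 : ℝ) 1) (hm : m ≠ 0)
    (h : (m + 1) ^ 2 * (p ^ 3 * (1 - p)) ≤ 0.669 * m) (j : ℕ) :
    (m + 1) * (p * (1 - p)) * (bernsteinPolynomial ℝ m j).eval p ≤ 0.516 / p := by
  have hp0 := hp.1
  have hq := sub_pos.2 hp.2
  have : (0 : ℝ) < m := by positivity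
  have hsq : ((m + 1) * (p * (1 - p)) / (2 * π) * p) ^ 2 * (π / (m * (p * (1 - p) / 5))) ≤
      0.516 ^ 2 := calc
    _ = 5 / (4 * π * m) * ((m + 1) ^ 2 * (p ^ 3 * (1 - p))) := by
      field_simp
      norm_num
    _ ≤ 5 / (4 * π * m) * (0.669 * m) := by gcongr
    _ = 5 * 0.669 / (4 * π) := by field_simp
    _ ≤ 0.516 ^ 2 := by
      rw [div_le_iff₀ (by positivity)]
      linarith [pi_gt_d4]
  rw [le_div_iff₀ hp0]
  calc (m + 1) * (p * (1 - p)) * (bernsteinPolynomial ℝ m j).eval p * p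
      = (m + 1) * (p * (1 - p)) / (2 * π) * p *
        (2 * π * (bernsteinPolynomial ℝ m j).eval p) := by field_simp
    _ ≤ (m + 1) * (p * (1 - p)) / (2 * π) * p * √(π / (m * (p * (1 - p) / 5))) := by
      gcongr
      exact two_pi_mul_eval_bernsteinPolynomial_le hp hm j
    _ ≤ 0.516 := by
      refine le_of_sq_le_sq ?_ (by norm_num)
      rwa [mul_pow, sq_sqrt (by positivity)]

theorem abs_mul_eval_bernsteinPolynomial_sub_le_of_lt (hp : p ∈ Set.Ioo (0 : ℝ) 1) (hm : m ≠ 0)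
    (h : 0.669 * m < (m + 1) ^ 2 * (p ^ 3 * (1 - p))) (j : ℕ) :
    |(m + 1) * (p * (1 - p)) * (bernsteinPolynomial ℝ m j).eval p -
        √((m + 1) * (p * (1 - p))) *
          φ ((j + 1 - (m + 1) * p) / √((m + 1) * (p * (1 - p))))| ≤ 0.516 / p := by
  have hm5 : 5 ≤ m := five_le_of_lt_sq_mul_cube_mul hm h
  have hlimit := abs_eval_bernsteinPolynomial_sub_gaussian_le hp (by lia : 2 ≤ m) j
  have hint := mul_integral_charFunErrorMajorant_le hp hm h
  have hs : 0 ≤ (m + 1) * (p * (1 - p)) := by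
    have := hp.1
    have := sub_pos.2 hp.2
    positivity
  set s := (m + 1) * (p * (1 - p))
  set b := (bernsteinPolynomial ℝ m j).eval p
  set g := φ ((j + 1 - (m + 1) * p) / √s)
  have hsqrt : s * (g / √s) = √s * g := by rw [mul_div_left_comm, div_sqrt, mul_comm]
  refine le_of_mul_le_mul_left ?_ two_pi_pos
  calc 2 * π * |s * b - √s * g| = s * |2 * π * b - 2 * π * (g / √s)| := by
        rw [← mul_sub, abs_mul, abs_of_pos two_pi_pos, mul_left_comm, ← abs_of_nonneg hs,
          ← abs_mul, mul_sub, abs_of_nonneg hs, hsqrt]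
    _ ≤ s * ∫ t, charFunErrorMajorant p m t := mul_le_mul_of_nonneg_left hlimit hs
    _ ≤ 2 * π * (0.516 / p) := hint

theorem abs_mul_eval_bernsteinPolynomial_sub_le (hp : p ∈ Set.Ioo (0 : ℝ) 1) (m j : ℕ) :
    |(m + 1) * (p * (1 - p)) * (bernsteinPolynomial ℝ m j).eval p -
        √((m + 1) * (p * (1 - p))) *
          φ ((j + 1 - (m + 1) * p) / √((m + 1) * (p * (1 - p))))| ≤ 0.516 / p := by
  have hp0 := hp.1
  have hq := sub_pos.2 hp.2
  have hb := eval_bernsteinPolynomial_nonneg (Set.Ioo_subset_Icc_self hp) m j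
  have hφ := gaussianPDFReal_nonneg 0 1
    ((j + 1 - (m + 1) * p) / √((m + 1) * (p * (1 - p))))
  rcases eq_or_ne m 0 with rfl | hm
  · refine abs_sub_le_of_nonneg_of_le (by positivity) ?_ (by positivity)
      (sqrt_mul_gaussianPDFReal_le hp0 ?_ _)
    · simpa using mul_eval_bernsteinPolynomial_zero_le hp j
    · push_cast
      linarith [cube_mul_one_sub_le p]
  rcases lt_or_ge (0.669 * (m : ℝ)) ((m + 1) ^ 2 * (p ^ 3 * (1 - p))) with h | h
  · exact abs_mul_eval_bernsteinPolynomial_sub_le_of_lt hp hm h j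
  · refine abs_sub_le_of_nonneg_of_le (by positivity)
      (mul_eval_bernsteinPolynomial_le hp hm h j) (by positivity)
      (sqrt_mul_gaussianPDFReal_le hp0 ?_ _)
    refine le_of_mul_le_mul_left ?_ (by positivity : (0 : ℝ) < m + 1)
    linarith

theorem sqrt_mul_gaussianPDFReal_of_zero_le {n : ℝ} (hn : 0 < n) (hp : p ∈ Set.Ioo (0 : ℝ) 1) :
    √(n * p * (1 - p)) * φ ((0 - n * p) / √(n * p * (1 - p))) ≤ 0.516 / p := by
  have hp0 := hp.1
  have hq := sub_pos.2 hp.2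
  have hr : 0 < √(n * p * (1 - p)) := by positivity
  have hsqrt : √(n * p * (1 - p)) ≤ |(0 - n * p) / √(n * p * (1 - p))| := by
    rw [zero_sub, abs_div, abs_neg, abs_of_pos (by positivity : 0 < n * p), abs_of_pos hr,
      le_div_iff₀ hr, mul_self_sqrt (by positivity)]
    exact mul_le_of_le_one_right (by positivity) (by linarith)
  calc _ ≤ _ := mul_le_mul_of_nonneg_right hsqrt (gaussianPDFReal_nonneg _ _ _)
    _ ≤ 0.242 := abs_mul_gaussianPDFReal_zero_one_le _
    _ ≤ 0.516 / p := by
      rw [le_div_iff₀ hp0]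
      linarith [hp.2]

end ScaledLocalLimit

section Derivatives

theorem derivative_sum_range_bernsteinPolynomial (R : Type*) [CommRing R] (n k : ℕ) :
    derivative (∑ i ∈ Finset.range (k + 1), bernsteinPolynomial R n i) =
      -n * bernsteinPolynomial R (n - 1) k := by
  induction k with
  | zero => simp [bernsteinPolynomial.derivative_zero]
  | succ k ih =>
    rw [Finset.sum_range_succ, derivative_add, ih, bernsteinPolynomial.derivative_succ]
    ring

theorem deriv_sum_range_choose_mul_pow_mul_pow (n k : ℕ) (p : ℝ) :
    deriv (fun s : ℝ =>
        ∑ i ∈ Finset.range (k + 1), (n.choose i : ℝ) * s ^ i * (1 - s) ^ (n - i)) p =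
      -(n * (bernsteinPolynomial ℝ (n - 1) k).eval p) := by
  simp_rw [← eval_bernsteinPolynomial, ← eval_finsetSum]
  rw [Polynomial.deriv, derivative_sum_range_bernsteinPolynomial]
  simp

theorem hasDerivAt_Phi (x : ℝ) : HasDerivAt Phi (φ x) x := by
  have hint : Integrable fun t : ℝ => rexp (-t ^ 2 / 2) := by
    refine (integrable_exp_neg_mul_sq one_half_pos).congr (.of_forall fun t => ?_)
    ring_nf
  have hcont : Continuous fun t : ℝ => rexp (-t ^ 2 / 2) := by fun_prop
  have hPhi : Phi = fun x => (√(2 * π))⁻¹ *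
      ((∫ t in (0 : ℝ)..x, rexp (-t ^ 2 / 2)) + ∫ t in Set.Iic 0, rexp (-t ^ 2 / 2)) := by
    ext x
    rw [Phi, ← integral_Iic_eq_integral_Iio,
      ← intervalIntegral.integral_Iic_sub_Iic hint.integrableOn hint.integrableOn, sub_add_cancel]
  rw [hPhi, gaussianPDFReal_zero_one]
  exact ((hcont.integral_hasStrictDerivAt 0 x).hasDerivAt.add_const _).const_mul _

theorem hasDerivAt_standardization {n p : ℝ} (k : ℝ) (hs : 0 < n * p * (1 - p)) :
    HasDerivAt (fun s : ℝ => (k - n * s) / √(n * s * (1 - s)))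
      (-(1 / (p * (1 - p))) * (√(n * p * (1 - p)) +
        (1 - 2 * p) / 2 * ((k - n * p) / √(n * p * (1 - p))))) p := by
  have hmean : HasDerivAt (fun s : ℝ => k - n * s) (-n) p := by
    simpa using ((hasDerivAt_id p).const_mul n).const_sub k
  have hvar : HasDerivAt (fun s : ℝ => n * s * (1 - s)) (n * (1 - 2 * p)) p := by
    refine (((hasDerivAt_id p).const_mul n).mul ((hasDerivAt_id p).const_sub 1)).congr_deriv ?_
    simp only [id]
    ring
  have hr : √(n * p * (1 - p)) ≠ 0 := (sqrt_pos.2 hs).ne'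
  have hn : n ≠ 0 := by aesop
  have hp : p ≠ 0 := by aesop
  have hq : 1 - p ≠ 0 := by aesop
  refine (hmean.div (hvar.sqrt hs.ne') hr).congr_deriv ?_
  have hsq := sq_sqrt hs.le
  set r := √(n * p * (1 - p))
  field_simp
  rw [hsq]
  ring

theorem deriv_Phi_standardization {n p : ℝ} (k : ℝ) (hs : 0 < n * p * (1 - p)) :
    deriv (fun s : ℝ => Phi ((k - n * s) / √(n * s * (1 - s)))) p =
      -(1 / (p * (1 - p))) *
        (√(n * p * (1 - p)) * φ ((k - n * p) / √(n * p * (1 - p))) +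
        (1 - 2 * p) / 2 * ((k - n * p) / √(n * p * (1 - p)) *
          φ ((k - n * p) / √(n * p * (1 - p))))) := by
  refine (((hasDerivAt_Phi _).comp p (hasDerivAt_standardization k hs)).congr_deriv ?_).deriv
  ring

theorem abs_mul_deriv_sum_add_sqrt_mul_gaussianPDFReal_le {n : ℕ} (hn : 1 ≤ n) (k : ℕ) {p : ℝ}
    (hp : p ∈ Set.Ioo (0 : ℝ) 1) :
    |p * (1 - p) * deriv (fun s : ℝ =>
        ∑ i ∈ Finset.range k, (n.choose i : ℝ) * s ^ i * (1 - s) ^ (n - i)) p +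
      √(n * p * (1 - p)) * φ ((k - n * p) / √(n * p * (1 - p)))| ≤ 0.516 / p := by
  rcases k with _ | j
  · have hφ := gaussianPDFReal_nonneg 0 1 (-(n * p) / √(n * p * (1 - p)))
    simpa [abs_of_nonneg hφ, abs_of_nonneg (sqrt_nonneg _)] using
      sqrt_mul_gaussianPDFReal_of_zero_le (by positivity : (0 : ℝ) < n) hp
  · obtain ⟨m, rfl⟩ := Nat.exists_eq_add_of_le' hn
    rw [deriv_sum_range_choose_mul_pow_mul_pow, ← abs_neg, Nat.add_sub_cancel]
    push_cast
    rw [mul_assoc (m + 1 : ℝ) p (1 - p)]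
    convert abs_mul_eval_bernsteinPolynomial_sub_le hp m j using 2
    ring

end Derivatives

theorem deriv_F_minus_deriv_G_bound_left_general (n k : ℕ) (hn : 1 ≤ n)
    (p : ℝ) (hp : p ∈ Set.Ioo (0 : ℝ) 1) :
    |deriv (fun s : ℝ =>
        ∑ i ∈ Finset.range k, (n.choose i : ℝ) * s ^ i * (1 - s) ^ (n - i)) p -
      deriv (fun s : ℝ => Phi (((k : ℝ) - n * s) / √(n * s * (1 - s)))) p| ≤
      (1 / (p * (1 - p))) * (0.516 / p + 0.121) := by
  have hp0 := hp.1
  have hq := sub_pos.2 hp.2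
  have hlimit := abs_mul_deriv_sum_add_sqrt_mul_gaussianPDFReal_le hn k hp
  rw [deriv_Phi_standardization k (by positivity : 0 < n * p * (1 - p))]
  set F' := deriv (fun s : ℝ =>
    ∑ i ∈ Finset.range k, (n.choose i : ℝ) * s ^ i * (1 - s) ^ (n - i)) p
  set r := √(n * p * (1 - p))
  set x := (k - n * p) / r
  calc _ = 1 / (p * (1 - p)) *
          |p * (1 - p) * F' + r * φ x + (1 - 2 * p) / 2 * (x * φ x)| := by
        rw [← abs_of_pos (by positivity : 0 < 1 / (p * (1 - p))), ← abs_mul,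
          abs_of_pos (by positivity : 0 < 1 / (p * (1 - p)))]
        congr 1
        field_simp
        ring
    _ ≤ 1 / (p * (1 - p)) * (0.516 / p + 0.121) := by
      gcongr
      exact (abs_add_le _ _).trans (add_le_add hlimit <|
        abs_mul_mul_gaussianPDFReal_zero_one_le (Set.Ioo_subset_Icc_self hp) x)

/-- For `n ≥ 1`, `0 ≤ k ≤ n`, `0 < p < 1`, `q = 1 − p`:
`|∂/∂p F_{n,p}(k) − ∂/∂p G_{n,p}(k)| ≤ (1/(pq))(c₁/p + c₂)` with
`c₁ = 0.516`, `c₂ = 0.121`, where `F_{n,p}(k) = Σ_{i=0}^{k−1} C(n,i) p^i q^{n−i}`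
and `G_{n,p}(k) = Φ((k − np)/√(npq))` are viewed as functions of `p`. -/
theorem deriv_F_minus_deriv_G_bound_left (n k : ℕ) (hn : 1 ≤ n) (hk : k ≤ n)
    (p : ℝ) (hp : p ∈ Set.Ioo (0 : ℝ) 1) :
    |deriv (fun s : ℝ =>
        ∑ i ∈ Finset.range k, (n.choose i : ℝ) * s ^ i * (1 - s) ^ (n - i)) p -
      deriv (fun s : ℝ =>
        Phi (((k : ℝ) - n * s) / Real.sqrt (n * s * (1 - s)))) p| ≤
      (1 / (p * (1 - p))) * (0.516 / p + 0.121) :=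
  deriv_F_minus_deriv_G_bound_left_general n k hn p hp
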